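/- arXiv:2006.06757 — 2 statements merged into one kernel-verified Lean document; each statement's English description precedes it below -/
import Mathlib

section
/- Let A be a right Artinian right uniserial ring, let M = mA be a cyclic right A-module generated by an element m, and let R = A((x)) be the Laurent series ring. Then the cyclic right R-submodule mR of the right R-module M((x)) of Laurent series with coefficients in M is a uniserial Artinian module. -/
theorem aux_ring (B : Type*) [Ring B] [IsArtinianRing B]
    (huni : ∀ I J : Submodule B B, I ≤ J ∨ J ≤ I) :
    ∃ (p : B) (n : ℕ), p ^ n = 0 ∧ (∀ b, IsUnit b ∨ ∃ c, b = c * p) ∧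
      (∀ b, ∃ c, p * b = c * p) := by
  have hprin : ∀ N : Submodule B B, N.FG → ∃ p, N = Submodule.span B {p} := by
    intro N hN
    refine Submodule.fg_induction (motive := fun N _ => ∃ p, N = Submodule.span B {p}) ?_ ?_ N hN
    · intro x; exact ⟨x, rfl⟩
    · intro N₁ N₂ _ _ h₁ h₂
      rcases huni N₁ N₂ with h | h
      · rwa [sup_eq_right.2 h]
      · rwa [sup_eq_left.2 h]
  obtain ⟨p, hp⟩ := hprin (Ring.jacobson B) (IsNoetherian.noetherian _)
  have hmem : ∀ b, b ∈ Ring.jacobson B → ∃ c, b = c * p := by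
    intro b hb
    rw [hp, Submodule.mem_span_singleton] at hb
    obtain ⟨c, hc⟩ := hb
    exact ⟨c, hc.symm⟩
  have hpJ : p ∈ Ring.jacobson B := by
    rw [hp]; exact Submodule.mem_span_singleton_self p
  obtain ⟨n, hn⟩ := IsArtinianRing.isNilpotent_jacobson_bot (R := B)
  rw [Ideal.jacobson_bot] at hn
  refine ⟨p, n, ?_, ?_, ?_⟩
  · have := Ideal.pow_mem_pow hpJ n
    rw [hn] at this
    simpa using this
  · intro b
    by_cases hb : b ∈ Ring.jacobson B
    · exact Or.inr (hmem b hb)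
    left
    have htop : Ideal.span {b} = ⊤ := by
      by_contra hne
      obtain ⟨K, hK, hle⟩ := Ideal.exists_le_maximal _ hne
      apply hb
      rw [Ring.jacobson_eq_sInf_isMaximal]
      refine Submodule.mem_sInf.2 ?_
      intro L hL
      have hbK : b ∈ K := hle (Ideal.mem_span_singleton_self b)
      rcases huni K L with h | h
      · exact h hbK
      · have := Ideal.IsMaximal.eq_of_le hL hK.ne_top h
        rw [this]; exact hbK
    have h1 : (1 : B) ∈ Ideal.span {b} := by rw [htop]; trivial
    obtain ⟨c, hc⟩ := Ideal.mem_span_singleton'.1 h1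
    exact IsUnit.of_mul_eq_one_right c hc
  · intro b
    exact hmem _ (Ideal.mul_mem_right _ _ hpJ)

theorem aux_div {B : Type*} [Ring B] (p : B) (f : HahnSeries ℤ B)
    (h : ∀ i, ∃ c, f.coeff i = c * p) :
    ∃ g : HahnSeries ℤ B, f = g * HahnSeries.single 0 p := by
  classical
  choose c hc using h
  refine ⟨⟨fun i => if f.coeff i = 0 then 0 else c i, ?_⟩, ?_⟩
  · refine f.isPWO_support.mono ?_
    intro i hi
    simp only [Function.mem_support, ne_eq, ite_eq_left_iff, not_forall] at hi
    exact hi.1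
  · ext i
    rw [HahnSeries.coeff_mul_single_zero]
    by_cases h0 : f.coeff i = 0
    · simp [h0]
    · simp [h0, hc i]

theorem aux_nil {S : Type*} [Ring S] (P : S) (n : ℕ) (hn : P ^ n = 0)
    (hcomm : ∀ s, ∃ t, P * s = t * P) (g : S) : IsNilpotent (g * P) := by
  have key : ∀ k, ∃ s, (g * P) ^ k = s * P ^ k := by
    intro k
    induction k with
    | zero => exact ⟨1, by simp⟩
    | succ k ih =>
      obtain ⟨s, hs⟩ := ih
      obtain ⟨t, ht⟩ := hcomm s
      refine ⟨g * t, ?_⟩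
      rw [pow_succ', hs, pow_succ', mul_assoc, ← mul_assoc P, ht]
      simp only [mul_assoc]
  obtain ⟨s, hs⟩ := key n
  exact ⟨n, by rw [hs, hn, mul_zero]⟩

theorem aux_unit_or {B : Type*} [Ring B] (p : B) (n : ℕ) (hn : p ^ n = 0)
    (hB : ∀ b, IsUnit b ∨ ∃ c, b = c * p)
    (hcomm : ∀ b, ∃ c, p * b = c * p) (f : HahnSeries ℤ B) :
    IsUnit f ∨ ∃ g : HahnSeries ℤ B, f = g * HahnSeries.single 0 p := by
  classical
  by_cases h : ∀ i, ∃ c, f.coeff i = c * p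
  · exact Or.inr (aux_div p f h)
  left
  push Not at h
  have hwf : Set.IsWF {i | ∀ c, f.coeff i ≠ c * p} := by
    refine f.isWF_support.mono ?_
    intro i hi h0
    exact hi 0 (by simpa using h0)
  have hne : Set.Nonempty {i | ∀ c, f.coeff i ≠ c * p} := h
  set k := hwf.min hne with hk
  have hkm : ∀ c, f.coeff k ≠ c * p := hwf.min_mem hne
  have hlt : ∀ i, i < k → ∃ c, f.coeff i = c * p := by
    intro i hi
    by_contra hcon
    push Not at hcon
    exact hwf.not_lt_min hne hcon hi
  obtain ⟨u, hu⟩ : IsUnit (f.coeff k) := (hB _).resolve_right (by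
    rintro ⟨c, hc⟩; exact hkm c hc)
  let φ : PowerSeries B := PowerSeries.mk (fun j : ℕ => f.coeff (k + j))
  have hφ : PowerSeries.constantCoeff φ = u := by
    simp [φ, hu]
  have hφu : IsUnit φ := by
    refine ⟨⟨φ, PowerSeries.invOfUnit φ u, PowerSeries.mul_invOfUnit φ u hφ,
      PowerSeries.invOfUnit_mul φ u hφ⟩, rfl⟩
  have hsu : IsUnit (HahnSeries.single k (1 : B)) := by
    refine ⟨⟨HahnSeries.single k 1, HahnSeries.single (-k) 1, ?_, ?_⟩, rfl⟩ <;>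
    simp [HahnSeries.single_mul_single]
  have hv : IsUnit (HahnSeries.single k (1 : B) * HahnSeries.ofPowerSeries ℤ B φ) :=
    hsu.mul (hφu.map _)
  obtain ⟨v, hv⟩ := hv
  obtain ⟨g, hg⟩ := aux_div p (f - (v : HahnSeries ℤ B)) (by
    intro i
    rw [HahnSeries.coeff_sub, hv, HahnSeries.coeff_single_mul, one_mul, PowerSeries.coeff_coe]
    by_cases hi : i < k
    · obtain ⟨c, hc⟩ := hlt i hi
      exact ⟨c, by rw [if_pos (by omega), sub_zero, hc]⟩
    · refine ⟨0, ?_⟩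
      rw [if_neg (by omega)]
      have : k + ((i - k).natAbs : ℤ) = i := by omega
      rw [PowerSeries.coeff_mk, this, sub_self, zero_mul])
  have hP : (HahnSeries.single (0 : ℤ) p) ^ n = 0 := by
    simp [HahnSeries.single_pow, hn]
  have hcS : ∀ s : HahnSeries ℤ B, ∃ t, HahnSeries.single 0 p * s = t * HahnSeries.single 0 p := by
    intro s
    apply aux_div
    intro i
    rw [HahnSeries.coeff_single_zero_mul]
    exact hcomm _
  have hnil := aux_nil _ n hP hcS ((↑v⁻¹ : HahnSeries ℤ B) * g)
  have h1 := v.isUnit.mul hnil.isUnit_one_add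
  have : f = (v : HahnSeries ℤ B) * (1 + (↑v⁻¹ : HahnSeries ℤ B) * g * HahnSeries.single 0 p) := by
    rw [mul_add, mul_one, mul_assoc, ← hg, Units.mul_inv_cancel_left]
    abel
  rwa [this]

theorem aux_factor {S : Type*} [Ring S] (P : S) (n : ℕ) (hn : P ^ n = 0)
    (h : ∀ f : S, IsUnit f ∨ ∃ g, f = g * P) (f : S) :
    ∃ (u : Sˣ) (k : ℕ), k ≤ n ∧ f = u * P ^ k := by
  have key : ∀ m, (∃ (u : Sˣ) (k : ℕ), k ≤ m ∧ f = u * P ^ k) ∨ ∃ g, f = g * P ^ m := by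
    intro m
    induction m with
    | zero => exact Or.inr ⟨f, by simp⟩
    | succ m ih =>
      rcases ih with ⟨u, k, hk, e⟩ | ⟨g, e⟩
      · exact Or.inl ⟨u, k, by omega, e⟩
      · rcases h g with ⟨u, rfl⟩ | ⟨g', rfl⟩
        · exact Or.inl ⟨u, m, by omega, e⟩
        · exact Or.inr ⟨g', by rw [e, pow_succ', mul_assoc]⟩
  rcases key n with h | ⟨g, e⟩
  · exact h
  · exact ⟨1, n, le_rfl, by rw [e, hn]; simp⟩

theorem aux_mod {S N : Type*} [Ring S] [AddCommGroup N] [Module S N] (P : S) (n : ℕ)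
    (h : ∀ f : S, ∃ (u : Sˣ) (k : ℕ), k ≤ n ∧ f = u * P ^ k) (e : N)
    (he : ∀ y : N, ∃ f : S, y = f • e) :
    (∀ X Y : Submodule S N, X ≤ Y ∨ Y ≤ X) ∧ IsArtinian S N := by
  have rep : ∀ y : N, ∃ k ≤ n, ∀ X : Submodule S N, y ∈ X ↔ P ^ k • e ∈ X := by
    intro y
    obtain ⟨f, rfl⟩ := he y
    obtain ⟨u, k, hk, rfl⟩ := h f
    refine ⟨k, hk, fun X => ?_⟩
    rw [mul_smul]
    constructor
    · intro hX
      have := X.smul_mem (↑u⁻¹ : S) hX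
      rwa [smul_smul, Units.inv_mul, one_smul] at this
    · exact X.smul_mem _
  have mono : ∀ (X : Submodule S N) (k l : ℕ), k ≤ l → P ^ k • e ∈ X → P ^ l • e ∈ X := by
    intro X k l hkl hX
    have := X.smul_mem (P ^ (l - k)) hX
    rwa [smul_smul, ← pow_add, Nat.sub_add_cancel hkl] at this
  constructor
  · intro X Y
    by_contra hcon
    push Not at hcon
    obtain ⟨x, hxX, hxY⟩ := Set.not_subset.1 hcon.1
    obtain ⟨y, hyY, hyX⟩ := Set.not_subset.1 hcon.2
    obtain ⟨k, -, hk⟩ := rep x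
    obtain ⟨l, -, hl⟩ := rep y
    rcases le_total k l with hkl | hkl
    · exact hyX ((hl X).2 (mono X k l hkl ((hk X).1 hxX)))
    · exact hxY ((hk Y).2 (mono Y l k hkl ((hl Y).1 hyY)))
  · have hfin : Finite (Submodule S N) := by
      refine Finite.of_injective
        (fun X : Submodule S N => {k : Fin (n + 1) | P ^ (k : ℕ) • e ∈ X}) ?_
      intro X Y hXY
      ext y
      obtain ⟨k, hkn, hk⟩ := rep y
      rw [hk X, hk Y]
      exact Set.ext_iff.1 hXY ⟨k, by omega⟩
    exact (isArtinian_iff S N).2 (Finite.wellFounded_of_trans_of_irrefl _)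


/-- Let `A` be a right Artinian right uniserial ring (right ideals are the
`Aᵐᵒᵖ`-submodules of `A`), and let `M = mA` be a cyclic right `A`-module (an
`Aᵐᵒᵖ`-module).  Form the module `M((x))` of Laurent series with coefficients in `M`,
which is a right module over the Laurent series ring `R = A((x))`; equivalently, it is
the left module `HahnModule ℤ Aᵐᵒᵖ M` over `Aᵐᵒᵖ((x)) = HahnSeries ℤ Aᵐᵒᵖ`, the
opposite ring of `R`.  Then the cyclic submodule `mR` generated in `M((x))` by the
constant series `m` is a uniserial Artinian module. -/
theorem stmt14 (A : Type*) [Ring A]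
    (hart : IsArtinian Aᵐᵒᵖ A)
    (huni : ∀ I J : Submodule Aᵐᵒᵖ A, I ≤ J ∨ J ≤ I)
    (M : Type*) [AddCommGroup M] [Module Aᵐᵒᵖ M]
    (m : M) (hm : Submodule.span Aᵐᵒᵖ {m} = ⊤)
    (mR : Submodule (HahnSeries ℤ Aᵐᵒᵖ) (HahnModule ℤ Aᵐᵒᵖ M))
    (hmR : mR = Submodule.span (HahnSeries ℤ Aᵐᵒᵖ)
      {(HahnModule.of Aᵐᵒᵖ) (HahnSeries.single (0 : ℤ) m)}) :
    (∀ X Y : Submodule (HahnSeries ℤ Aᵐᵒᵖ) mR, X ≤ Y ∨ Y ≤ X) ∧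
      IsArtinian (HahnSeries ℤ Aᵐᵒᵖ) mR := by
  let eqv : A ≃ₗ[Aᵐᵒᵖ] Aᵐᵒᵖ :=
    { toFun := MulOpposite.op
      invFun := MulOpposite.unop
      map_add' := fun _ _ => rfl
      map_smul' := fun _ _ => rfl
      left_inv := fun _ => rfl
      right_inv := fun _ => rfl }
  have hartB : IsArtinianRing Aᵐᵒᵖ := isArtinian_of_linearEquiv eqv
  have huniB : ∀ I J : Submodule Aᵐᵒᵖ Aᵐᵒᵖ, I ≤ J ∨ J ≤ I := by
    intro I J
    rcases huni (I.comap eqv.toLinearMap) (J.comap eqv.toLinearMap) with h | h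
    · left; intro x hx; exact h (x := MulOpposite.unop x) hx
    · right; intro x hx; exact h (x := MulOpposite.unop x) hx
  obtain ⟨p, n, hn, hu, hc⟩ := aux_ring Aᵐᵒᵖ huniB
  have hP : (HahnSeries.single (0 : ℤ) p) ^ n = 0 := by
    simp [HahnSeries.single_pow, hn]
  have hfac := aux_factor (HahnSeries.single (0 : ℤ) p) n hP (aux_unit_or p n hn hu hc)
  subst hmR
  refine aux_mod _ n hfac (N := Submodule.span (HahnSeries ℤ Aᵐᵒᵖ)
      {(HahnModule.of Aᵐᵒᵖ) (HahnSeries.single (0 : ℤ) m)}) ⟨_, Submodule.mem_span_singleton_self _⟩ ?_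
  rintro ⟨y, hy⟩
  obtain ⟨f, hf⟩ := Submodule.mem_span_singleton.1 hy
  exact ⟨f, Subtype.ext hf.symm⟩
end

section
/- Let A be a ring, let R = A((x)) be the Laurent series ring, and let e be a nonzero idempotent of A such that the corner ring eAe is a right uniserial right Artinian ring. Then the corner ring eRe is a right uniserial right Artinian ring; in particular, e is a local idempotent of R. -/
/-- The corner ring `eAe` of a ring `A` at an idempotent `e`, realized as the
subtype of elements fixed by left and right multiplication by `e`
(for an idempotent `e`, `{x | e * x = x ∧ x * e = x} = eAe`). -/
def Corner {A : Type*} [Ring A] {e : A} (_he : IsIdempotentElem e) : Type _ :=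
  {x : A // e * x = x ∧ x * e = x}

namespace Corner

variable {A : Type*} [Ring A] {e : A} {he : IsIdempotentElem e}

instance : Zero (Corner he) := ⟨⟨0, by simp⟩⟩
instance : One (Corner he) := ⟨⟨e, he, he⟩⟩
instance : Add (Corner he) :=
  ⟨fun x y => ⟨x.1 + y.1, by rw [mul_add, x.2.1, y.2.1], by rw [add_mul, x.2.2, y.2.2]⟩⟩
instance : Neg (Corner he) :=
  ⟨fun x => ⟨-x.1, by rw [mul_neg, x.2.1], by rw [neg_mul, x.2.2]⟩⟩
instance : Sub (Corner he) :=
  ⟨fun x y => ⟨x.1 - y.1, by rw [mul_sub, x.2.1, y.2.1], by rw [sub_mul, x.2.2, y.2.2]⟩⟩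
instance : Mul (Corner he) :=
  ⟨fun x y => ⟨x.1 * y.1, by rw [← mul_assoc, x.2.1], by rw [mul_assoc, y.2.2]⟩⟩
instance : SMul ℕ (Corner he) :=
  ⟨fun n x => ⟨n • x.1, by rw [mul_smul_comm, x.2.1], by rw [smul_mul_assoc, x.2.2]⟩⟩
instance : SMul ℤ (Corner he) :=
  ⟨fun n x => ⟨n • x.1, by rw [mul_smul_comm, x.2.1], by rw [smul_mul_assoc, x.2.2]⟩⟩

instance : AddCommGroup (Corner he) :=
  Function.Injective.addCommGroup (fun x : Corner he => x.1) Subtype.val_injective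
    rfl (fun _ _ => rfl) (fun _ => rfl) (fun _ _ => rfl) (fun _ _ => rfl) (fun _ _ => rfl)

/-- The corner ring `eAe` is a ring with identity element `e`. -/
instance : Ring (Corner he) where
  __ := (inferInstance : AddCommGroup (Corner he))
  mul_assoc x y z := by exact Subtype.ext (mul_assoc x.1 y.1 z.1)
  one_mul x := Subtype.ext x.2.1
  mul_one x := Subtype.ext x.2.2
  left_distrib x y z := by exact Subtype.ext (mul_add x.1 y.1 z.1)
  right_distrib x y z := by exact Subtype.ext (add_mul x.1 y.1 z.1)
  zero_mul x := by exact Subtype.ext (zero_mul x.1)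
  mul_zero x := by exact Subtype.ext (mul_zero x.1)

end Corner


/-- The image of an idempotent `e` of `A` under the constant-series embedding
`A → A((x))` is an idempotent of the Laurent series ring. -/
theorem isIdempotentElem_C {A : Type*} [Ring A] {e : A} (he : IsIdempotentElem e) :
    IsIdempotentElem (HahnSeries.C e : LaurentSeries A) := by
  unfold IsIdempotentElem
  rw [← map_mul, he]

/-- The structural property: a nilpotent `p` such that each element is a unit or in `pS`. -/
def ChainGen (S : Type*) [Ring S] (p : S) : Prop :=
  IsNilpotent p ∧ ∀ f : S, IsUnit f ∨ ∃ g, f = p * g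

theorem ChainGen.not_right_inv {S : Type*} [Ring S] [Nontrivial S] {p : S} (h : IsNilpotent p)
    (t : S) : p * t ≠ 1 := by
  intro ht
  obtain ⟨n, hn⟩ := h
  have : ∀ m : ℕ, p ^ m * t ^ m = 1 := by
    intro m
    induction m with
    | zero => simp
    | succ m ih =>
      rw [pow_succ, pow_succ', mul_assoc, ← mul_assoc p, ht, one_mul, ih]
  have h1 := this n
  rw [hn, zero_mul] at h1
  exact zero_ne_one h1

theorem ChainGen.not_left_inv {S : Type*} [Ring S] [Nontrivial S] {p : S} (h : IsNilpotent p)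
    (t : S) : t * p ≠ 1 := by
  intro ht
  obtain ⟨n, hn⟩ := h
  have : ∀ m : ℕ, t ^ m * p ^ m = 1 := by
    intro m
    induction m with
    | zero => simp
    | succ m ih =>
      rw [pow_succ, pow_succ', mul_assoc, ← mul_assoc t, ht, one_mul, ih]
  have h1 := this n
  rw [hn, mul_zero] at h1
  exact zero_ne_one h1

theorem ChainGen.swap {S : Type*} [Ring S] [Nontrivial S] {p : S} (h : ChainGen S p) (b : S) :
    ∃ g, b * p = p * g := by
  rcases h.2 (b * p) with hu | hg
  · obtain ⟨u, hu⟩ := hu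
    exfalso
    apply ChainGen.not_left_inv h.1 (↑u⁻¹ * b)
    rw [mul_assoc, ← hu, Units.inv_mul]
  · exact hg

theorem ChainGen.exists_pow {S : Type*} [Ring S] {p : S} (h : ChainGen S p) {N : ℕ}
    (hN : p ^ N = 0) (f : S) : ∃ k ≤ N, ∃ u : Sˣ, f = p ^ k * u := by
  classical
  by_contra hcon
  push Not at hcon
  have key : ∀ n ≤ N, ∃ g, f = p ^ n * g := by
    intro n
    induction n with
    | zero => intro _; exact ⟨f, by simp⟩
    | succ n ih =>
      intro hn
      obtain ⟨g, hg⟩ := ih (by omega)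
      rcases h.2 g with ⟨u, hu⟩ | ⟨g', hg'⟩
      · exact absurd (hu ▸ hg) (hcon n (by omega) u)
      · exact ⟨g', by rw [hg, hg', pow_succ, mul_assoc]⟩
  obtain ⟨g, hg⟩ := key N le_rfl
  apply hcon N le_rfl 1
  rw [hg, hN]; simp

theorem ChainGen.mem_iff {S : Type*} [Ring S] {p : S} (h : ChainGen S p) {N : ℕ}
    (hN : p ^ N = 0) (I : Submodule Sᵐᵒᵖ S) :
    ∃ n ≤ N, ∀ f, f ∈ I ↔ ∃ g, f = p ^ n * g := by
  classical
  have hex : ∃ n, p ^ n ∈ I := ⟨N, by rw [hN]; exact I.zero_mem⟩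
  refine ⟨Nat.find hex, Nat.find_min' hex (by rw [hN]; exact I.zero_mem), fun f => ⟨?_, ?_⟩⟩
  · intro hf
    obtain ⟨k, -, u, rfl⟩ := h.exists_pow hN f
    have hk : p ^ k ∈ I := by
      have := I.smul_mem (MulOpposite.op (↑u⁻¹ : S)) hf
      simpa [mul_assoc] using this
    have hle := Nat.find_min' hex hk
    refine ⟨p ^ (k - Nat.find hex) * u, ?_⟩
    rw [← mul_assoc, ← pow_add, Nat.add_sub_cancel' hle]
  · rintro ⟨g, rfl⟩
    exact I.smul_mem (MulOpposite.op g) (Nat.find_spec hex)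

theorem ChainGen.uniserial {S : Type*} [Ring S] {p : S} (h : ChainGen S p)
    (I J : Submodule Sᵐᵒᵖ S) : I ≤ J ∨ J ≤ I := by
  obtain ⟨N, hN⟩ := h.1
  obtain ⟨n, -, hn⟩ := h.mem_iff hN I
  obtain ⟨m, -, hm⟩ := h.mem_iff hN J
  have aux : ∀ {a b : ℕ}, a ≤ b → ∀ g : S, ∃ g', p ^ b * g = p ^ a * g' := fun {a b} hab g =>
    ⟨p ^ (b - a) * g, by rw [← mul_assoc, ← pow_add, Nat.add_sub_cancel' hab]⟩
  rcases le_total n m with hnm | hnm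
  · right
    intro f hf
    obtain ⟨g, rfl⟩ := (hm f).1 hf
    exact (hn _).2 (aux hnm g)
  · left
    intro f hf
    obtain ⟨g, rfl⟩ := (hn f).1 hf
    exact (hm _).2 (aux hnm g)

theorem ChainGen.artinian {S : Type*} [Ring S] {p : S} (h : ChainGen S p) :
    IsArtinian Sᵐᵒᵖ S := by
  obtain ⟨N, hN⟩ := h.1
  choose n hn hmem using fun I => h.mem_iff hN I
  have : Finite (Submodule Sᵐᵒᵖ S) := by
    apply Finite.of_injective (fun I => (⟨n I, Nat.lt_succ_of_le (hn I)⟩ : Fin (N + 1)))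
    intro I J hIJ
    have hIJ' : n I = n J := by simpa using hIJ
    ext f
    rw [hmem, hmem, hIJ']
  exact ⟨(inferInstance : WellFoundedLT (Submodule Sᵐᵒᵖ S)).wf⟩

theorem ChainGen.isLocalRing {S : Type*} [Ring S] [Nontrivial S] {p : S} (h : ChainGen S p) :
    IsLocalRing S := by
  refine IsLocalRing.of_nonunits_add ?_
  intro a b ha hb
  obtain ⟨x, rfl⟩ := (h.2 a).resolve_left ha
  obtain ⟨y, rfl⟩ := (h.2 b).resolve_left hb
  rintro ⟨u, hu⟩
  apply ChainGen.not_right_inv h.1 ((x + y) * ↑u⁻¹)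
  rw [← mul_assoc, mul_add, ← hu, Units.mul_inv]

theorem ChainGen.map {S T : Type*} [Ring S] [Ring T] {p : S} (h : ChainGen S p) (φ : S →+* T)
    (hφ : Function.Surjective φ) : ChainGen T (φ p) := by
  refine ⟨h.1.map φ, fun f => ?_⟩
  obtain ⟨f, rfl⟩ := hφ f
  rcases h.2 f with hu | ⟨g, rfl⟩
  · exact Or.inl (hu.map φ)
  · exact Or.inr ⟨φ g, map_mul _ _ _⟩

/-- A ring is isomorphic to its opposite as a right module. -/
def opLinEquiv (B : Type*) [Ring B] : B ≃ₗ[Bᵐᵒᵖ] Bᵐᵒᵖ where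
  toFun := MulOpposite.op
  invFun := MulOpposite.unop
  left_inv _ := rfl
  right_inv _ := rfl
  map_add' _ _ := rfl
  map_smul' _ _ := rfl

theorem exists_chainGen {B : Type*} [Ring B] [Nontrivial B]
    (huni : ∀ I J : Submodule Bᵐᵒᵖ B, I ≤ J ∨ J ≤ I) (hart : IsArtinian Bᵐᵒᵖ B) :
    ∃ p : B, ChainGen B p := by
  have hA : IsArtinianRing Bᵐᵒᵖ := (opLinEquiv B).isArtinian_iff.1 hart
  have hnoeth : IsNoetherian Bᵐᵒᵖ B :=
    IsSemiprimaryRing.isNoetherian_iff_isArtinian.2 hart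
  -- right invertible elements are units
  have hunit : ∀ x y : B, x * y = 1 → IsUnit x := by
    intro x y hxy
    let L : B →ₗ[Bᵐᵒᵖ] B :=
      { toFun := fun b => y * b
        map_add' := mul_add y
        map_smul' := fun c b => by
          simp [mul_assoc] }
    have hinj : Function.Injective L := by
      intro a b hab
      have h1 : y * a = y * b := hab
      have h2 := congrArg (x * ·) h1
      simpa [← mul_assoc, hxy] using h2
    have hsurj := IsArtinian.surjective_of_injective_endomorphism L hinj
    obtain ⟨z, hz⟩ := hsurj 1
    have hz' : y * z = 1 := hz
    have hxz : x = z := by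
      calc x = x * (y * z) := by rw [hz', mul_one]
        _ = z := by rw [← mul_assoc, hxy, one_mul]
    exact ⟨⟨x, y, hxy, hxz ▸ hz'⟩, rfl⟩
  have hmemspan : ∀ a f : B, f ∈ Submodule.span Bᵐᵒᵖ {a} ↔ ∃ g, f = a * g := by
    intro a f
    rw [Submodule.mem_span_singleton]
    constructor
    · rintro ⟨c, rfl⟩; exact ⟨c.unop, rfl⟩
    · rintro ⟨g, rfl⟩; exact ⟨MulOpposite.op g, rfl⟩
  -- maximal proper principal right ideal
  let s : Set (Submodule Bᵐᵒᵖ B) := {I | (1 : B) ∉ I ∧ ∃ a, I = Submodule.span Bᵐᵒᵖ {a}}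
  have hs : s.Nonempty := ⟨Submodule.span Bᵐᵒᵖ {0}, by simp, 0, rfl⟩
  obtain ⟨M, ⟨hM1, p, rfl⟩, hmax⟩ := set_has_maximal_iff_noetherian.2 hnoeth s hs
  have hdich : ∀ f : B, IsUnit f ∨ ∃ g, f = p * g := by
    intro f
    by_cases hf : (1 : B) ∈ Submodule.span Bᵐᵒᵖ {f}
    · left
      obtain ⟨g, hg⟩ := (hmemspan f 1).1 hf
      exact hunit f g hg.symm
    · right
      rw [← hmemspan]
      have hle : Submodule.span Bᵐᵒᵖ {f} ≤ Submodule.span Bᵐᵒᵖ {p} := by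
        rcases huni (Submodule.span Bᵐᵒᵖ {f}) (Submodule.span Bᵐᵒᵖ {p}) with h | h
        · exact h
        · by_contra hn
          exact hmax _ ⟨hf, f, rfl⟩ (lt_of_le_not_ge h hn)
      exact hle (Submodule.mem_span_singleton_self f)
  refine ⟨p, ?_, hdich⟩
  -- nilpotency
  let c : ℕ →o (Submodule Bᵐᵒᵖ B)ᵒᵈ :=
    ⟨fun n => OrderDual.toDual (Submodule.span Bᵐᵒᵖ {p ^ n}), by
      intro a b hab
      change Submodule.span Bᵐᵒᵖ {p ^ b} ≤ Submodule.span Bᵐᵒᵖ {p ^ a}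
      rw [Submodule.span_singleton_le_iff_mem, hmemspan]
      exact ⟨p ^ (b - a), by rw [← pow_add, Nat.add_sub_cancel' hab]⟩⟩
  obtain ⟨n, hn⟩ := IsArtinian.monotone_stabilizes c
  have h1 : Submodule.span Bᵐᵒᵖ {p ^ n} = Submodule.span Bᵐᵒᵖ {p ^ (n + 1)} :=
    hn (n + 1) (Nat.le_succ n)
  have h2 : p ^ n ∈ Submodule.span Bᵐᵒᵖ {p ^ (n + 1)} := by
    rw [← h1]; exact Submodule.mem_span_singleton_self _
  obtain ⟨b, hb⟩ := (hmemspan _ _).1 h2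
  have h3 : IsUnit (1 - p * b) := by
    rcases hdich (1 - p * b) with h | ⟨g, hg⟩
    · exact h
    · exact absurd ((hmemspan _ _).2 ⟨g + b, by rw [mul_add, ← hg]; abel⟩) hM1
  refine ⟨n, ?_⟩
  have h4 : p ^ n * (1 - p * b) = 0 := by
    rw [mul_sub, mul_one, ← mul_assoc, ← pow_succ, ← hb, sub_self]
  exact (h3.mul_left_eq_zero).1 h4

/-- A Laurent series all of whose coefficients lie in `pB` is a multiple of `p`. -/
theorem exists_C_mul {B : Type*} [Ring B] (p : B) (f : LaurentSeries B)
    (h : ∀ i, ∃ b, f.coeff i = p * b) : ∃ g : LaurentSeries B, f = HahnSeries.C p * g := by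
  classical
  choose b hb using h
  refine ⟨⟨fun i => if f.coeff i = 0 then 0 else b i, f.isPWO_support.mono ?_⟩, ?_⟩
  · intro i hi
    simp only [Function.mem_support, ne_eq, ite_eq_left_iff, not_forall] at hi
    exact hi.1
  · ext i
    rw [HahnSeries.C_mul_eq_smul, HahnSeries.coeff_smul]
    by_cases h0 : f.coeff i = 0
    · simp [h0]
    · simp only [h0, if_false, smul_eq_mul]
      exact hb i

theorem isUnit_laurent {B : Type*} [Ring B] (h : LaurentSeries B) (k : ℤ)
    (hk : IsUnit (h.coeff k)) (hlt : ∀ i < k, h.coeff i = 0) : IsUnit h := by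
  have hu1 : IsUnit (HahnSeries.single k (1 : B) : LaurentSeries B) :=
    ⟨⟨HahnSeries.single k 1, HahnSeries.single (-k) 1, by simp, by simp⟩, rfl⟩
  have hu2 : IsUnit (HahnSeries.ofPowerSeries ℤ B
      (PowerSeries.mk fun n : ℕ => h.coeff (k + n))) := by
    apply IsUnit.map
    rw [PowerSeries.isUnit_iff_constantCoeff]
    simpa using hk
  convert hu1.mul hu2 using 1
  ext i
  rw [HahnSeries.coeff_single_mul, one_mul]
  rcases lt_or_ge i k with hi | hi
  · rw [hlt i hi, HahnSeries.ofPowerSeries_apply, HahnSeries.embDomain_of_notMem_range]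
    rintro ⟨m, hm⟩
    have : (m : ℤ) = i - k := hm
    omega
  · obtain ⟨m, hm⟩ := Int.eq_ofNat_of_zero_le (sub_nonneg.2 hi)
    rw [hm, HahnSeries.ofPowerSeries_apply_coeff, PowerSeries.coeff_mk, ← hm]
    congr 1
    omega

theorem ChainGen.laurent {B : Type*} [Ring B] [Nontrivial B] {p : B} (h : ChainGen B p) :
    ChainGen (LaurentSeries B) (HahnSeries.C p) := by
  classical
  have hnil : IsNilpotent (HahnSeries.C p : LaurentSeries B) := h.1.map HahnSeries.C
  refine ⟨hnil, fun f => ?_⟩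
  by_cases hall : ∀ i, ∃ b, f.coeff i = p * b
  · exact Or.inr (exists_C_mul p f hall)
  left
  push Not at hall
  obtain ⟨i₀, hi₀⟩ := hall
  have hi₀u : IsUnit (f.coeff i₀) := (h.2 _).resolve_right fun ⟨g, hg⟩ => hi₀ g hg
  -- least index with unit coefficient
  have hpwo : Set.IsWF {i : ℤ | IsUnit (f.coeff i)} := by
    apply f.isWF_support.mono
    intro i hi
    exact hi.ne_zero
  let k := hpwo.min ⟨i₀, hi₀u⟩
  have hk : IsUnit (f.coeff k) := hpwo.min_mem ⟨i₀, hi₀u⟩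
  have hklt : ∀ i < k, ∃ b, f.coeff i = p * b := fun i hi =>
    (h.2 _).resolve_left fun hu => hpwo.not_lt_min ⟨i₀, hi₀u⟩ hu hi
  let t : LaurentSeries B := ⟨fun i => if i < k then 0 else f.coeff i, f.isPWO_support.mono (by
    intro i hi
    simp only [Function.mem_support, ne_eq, ite_eq_left_iff, not_forall] at hi
    exact hi.2)⟩
  have ht : IsUnit t := isUnit_laurent t k (by simpa [t] using hk) (by
    intro i hi
    simp [t, hi])
  obtain ⟨g, hg⟩ := exists_C_mul p (f - t) (by
    intro i
    by_cases hi : i < k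
    · simpa [t, hi] using hklt i hi
    · exact ⟨0, by simp [t, hi]⟩)
  have hswap : ∀ s : LaurentSeries B, ∃ s', s * HahnSeries.C p = HahnSeries.C p * s' := by
    intro s
    apply exists_C_mul
    intro i
    obtain ⟨b, hb⟩ := h.swap (s.coeff i)
    refine ⟨b, ?_⟩
    rw [← hb]
    exact HahnSeries.coeff_mul_single_zero
  have hswapn : ∀ (n : ℕ) (s : LaurentSeries B),
      ∃ s', s * HahnSeries.C p ^ n = HahnSeries.C p ^ n * s' := by
    intro n
    induction n with
    | zero => intro s; exact ⟨s, by simp⟩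
    | succ n ih =>
      intro s
      obtain ⟨s', hs'⟩ := ih s
      obtain ⟨s'', hs''⟩ := hswap s'
      exact ⟨s'', by rw [pow_succ, ← mul_assoc, hs', mul_assoc, hs'', mul_assoc]⟩
  obtain ⟨u, hu⟩ := ht
  obtain ⟨q, hq⟩ := hswap ↑u⁻¹
  have hpow : ∀ (s : LaurentSeries B) (n : ℕ),
      ∃ s', (HahnSeries.C p * s) ^ n = HahnSeries.C p ^ n * s' := by
    intro s n
    induction n with
    | zero => exact ⟨1, by simp⟩
    | succ n ih =>
      obtain ⟨s', hs'⟩ := ih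
      obtain ⟨s'', hs''⟩ := hswapn n s
      refine ⟨s'' * s', ?_⟩
      rw [pow_succ', hs', mul_assoc, ← mul_assoc s, hs'', pow_succ', mul_assoc, mul_assoc]
  have hnil2 : IsNilpotent (HahnSeries.C p * (q * g)) := by
    obtain ⟨N, hN⟩ := hnil
    obtain ⟨s', hs'⟩ := hpow (q * g) N
    exact ⟨N, by rw [hs', hN, zero_mul]⟩
  have hf : f = (u : LaurentSeries B) * (1 + HahnSeries.C p * (q * g)) := by
    rw [← mul_assoc (HahnSeries.C p), ← hq, mul_add, mul_one, ← mul_assoc, ← mul_assoc,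
      Units.mul_inv, one_mul, ← hg, hu]
    abel
  rw [hf]
  exact u.isUnit.mul hnil2.isUnit_one_add

/-- The map `(eAe)((x)) → e A((x)) e`. -/
noncomputable def cornerLaurent {A : Type*} [Ring A] {e : A} (he : IsIdempotentElem e) :
    LaurentSeries (Corner he) →+* Corner (isIdempotentElem_C he) where
  toFun g := ⟨⟨fun i => (g.coeff i).1, g.isPWO_support.mono (by
      intro i hi h0
      exact hi (congrArg Subtype.val h0))⟩, by
    constructor
    · ext i
      rw [HahnSeries.C_mul_eq_smul, HahnSeries.coeff_smul]
      exact (g.coeff i).2.1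
    · ext i
      exact HahnSeries.coeff_mul_single_zero.trans (g.coeff i).2.2⟩
  map_one' := by
    apply Subtype.ext
    ext i
    change ((1 : LaurentSeries (Corner he)).coeff i).1 = (HahnSeries.C e : LaurentSeries A).coeff i
    rw [HahnSeries.coeff_one, HahnSeries.C_apply, HahnSeries.coeff_single]
    split_ifs <;> rfl
  map_zero' := rfl
  map_add' _ _ := rfl
  map_mul' f g := by
    apply Subtype.ext
    ext i
    let ι : Corner he →ₙ+* A :=
      { toFun := fun x => x.1, map_zero' := rfl, map_add' := fun _ _ => rfl,
        map_mul' := fun _ _ => rfl }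
    exact congrArg (fun s : LaurentSeries A => s.coeff i)
      (HahnSeries.map_mul (Γ := ℤ) ι (x := f) (y := g))

theorem cornerLaurent_surjective {A : Type*} [Ring A] {e : A} (he : IsIdempotentElem e) :
    Function.Surjective (cornerLaurent he) := by
  rintro ⟨f, h1, h2⟩
  refine ⟨⟨fun i => ⟨f.coeff i, ?_, ?_⟩, f.isPWO_support.mono ?_⟩, ?_⟩
  · have := congrArg (fun s : LaurentSeries A => s.coeff i) h1
    simpa [HahnSeries.C_mul_eq_smul] using this
  · have := congrArg (fun s : LaurentSeries A => s.coeff i) h2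
    exact HahnSeries.coeff_mul_single_zero.symm.trans this
  · intro i hi h0
    exact hi (Subtype.ext h0)
  · rfl

/-- Let `e` be a nonzero idempotent of a ring `A`, let `R = A((x))` be the Laurent
series ring, and suppose that the corner ring `eAe` is a right uniserial right Artinian
ring (right ideals are submodules over the opposite ring).  Then the corner ring `eRe`
is a right uniserial right Artinian ring; in particular, `e` is a local idempotent of
`R`, i.e. `eRe` is a local ring. -/
theorem stmt16 {A : Type*} [Ring A] {e : A} (he : IsIdempotentElem e) (hne : e ≠ 0)
    (huni : ∀ I J : Submodule (Corner he)ᵐᵒᵖ (Corner he), I ≤ J ∨ J ≤ I)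
    (hart : IsArtinian (Corner he)ᵐᵒᵖ (Corner he)) :
    (∀ I J : Submodule (Corner (isIdempotentElem_C he))ᵐᵒᵖ (Corner (isIdempotentElem_C he)),
        I ≤ J ∨ J ≤ I) ∧
      IsArtinian (Corner (isIdempotentElem_C he))ᵐᵒᵖ (Corner (isIdempotentElem_C he)) ∧
      IsLocalRing (Corner (isIdempotentElem_C he)) := by
  have : Nontrivial (Corner he) := ⟨1, 0, fun h => hne (congrArg Subtype.val h)⟩
  have : Nontrivial (Corner (isIdempotentElem_C he)) :=
    ⟨1, 0, fun h => HahnSeries.C_ne_zero hne (congrArg Subtype.val h)⟩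
  obtain ⟨p, hp⟩ := exists_chainGen huni hart
  have key := hp.laurent.map (cornerLaurent he) (cornerLaurent_surjective he)
  exact ⟨key.uniserial, key.artinian, key.isLocalRing⟩
end
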